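/- Let R be a ring and X a chain complex of left R-modules with a filtration (F^p)_{p∈ℤ}. Fix p, q ∈ ℤ and set n = p + q. If there exists r₀ ≥ 1 such that H_{n−1}(F^{p−r₀}) = 0, then (⋂_{r≥0} I^r_{p,q}) + F^{p−1}_n = (Ker ∂_n ∩ F^p_n) + F^{p−1}_n as submodules of X_n. -/

import Mathlib

open Submodule

variable {R : Type*} [Ring R]

section FiltrationSetup

variable (X : ℤ → Type*) [∀ n, AddCommGroup (X n)] [∀ n, Module R (X n)]

/-- The submodule `I^r_{p,q}` of `X_n` (where `n = p + q`):
`I^r_{p,q} = (∂_n)⁻¹(F^{p−r}_{n−1}) ∩ F^p_n`. -/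
def filtI (d : ∀ i j : ℤ, X i →ₗ[R] X j) (F : ℤ → ∀ n : ℤ, Submodule R (X n))
    (r p n : ℤ) : Submodule R (X n) :=
  Submodule.comap (d n (n - 1)) (F (p - r) (n - 1)) ⊓ F p n

/-- The submodule `J^r_{p,q}` of `X_n` (where `n = p + q`):
`J^r_{p,q} = ∂_{n+1}(F^{p+r−1}_{n+1}) ∩ F^p_n`. -/
def filtJ (d : ∀ i j : ℤ, X i →ₗ[R] X j) (F : ℤ → ∀ n : ℤ, Submodule R (X n))
    (r p n : ℤ) : Submodule R (X n) :=
  Submodule.map (d (n + 1) n) (F (p + r - 1) (n + 1)) ⊓ F p n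

/-- The `m`-th homology of a ℤ-indexed complex `(Y, e)` (with the homological-complex
convention `e i j : Y i →ₗ Y j`, nonzero only for `j = i − 1`):
`H_m = Ker(e m (m−1)) / Im(e (m+1) m)`. -/
abbrev homologyAt (Y : ℤ → Type*) [∀ n, AddCommGroup (Y n)] [∀ n, Module R (Y n)]
    (e : ∀ i j : ℤ, Y i →ₗ[R] Y j) (m : ℤ) :=
  ↥(LinearMap.ker (e m (m - 1))) ⧸
    Submodule.comap (LinearMap.ker (e m (m - 1))).subtype (LinearMap.range (e (m + 1) m))

variable (d : ∀ i j : ℤ, X i →ₗ[R] X j) (F : ℤ → ∀ n : ℤ, Submodule R (X n))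
variable (hsub : ∀ p i j : ℤ, ∀ x : X i, x ∈ F p i → d i j x ∈ F p j)

/-- The differentials of the subcomplex `F^p`, given by restricting those of `X`. -/
def subD (p i j : ℤ) : ↥(F p i) →ₗ[R] ↥(F p j) :=
  (d i j).restrict (fun x hx => hsub p i j x hx)

/-- The inclusion `Ker(∂_n^{F^p}) → Ker(∂_n^X)`. -/
def inclKer (p n : ℤ) :
    ↥(LinearMap.ker (subD X d F hsub p n (n - 1))) →ₗ[R] ↥(LinearMap.ker (d n (n - 1))) :=
  LinearMap.codRestrict _
    ((F p n).subtype.comp (LinearMap.ker (subD X d F hsub p n (n - 1))).subtype)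
    (fun x => by
      have hx : subD X d F hsub p n (n - 1) x.1 = 0 := x.2
      have h' : d n (n - 1) (x.1 : X n) = 0 := congrArg Subtype.val hx
      simpa [LinearMap.mem_ker] using h')

/-- The map `H_n(ι^p) : H_n(F^p) → H_n(X)` induced on homology by the inclusion
`ι^p : F^p → X`. -/
def homologyMapIncl (p n : ℤ) :
    homologyAt (fun m => ↥(F p m)) (subD X d F hsub p) n →ₗ[R] homologyAt X d n :=
  Submodule.mapQ _ _ (inclKer X d F hsub p n)
    (by
      rintro x ⟨y, hy⟩
      exact ⟨(y : X (n + 1)), congrArg Subtype.val hy⟩)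

end FiltrationSetup

/-- If `H_m(F^s) = 0`, every cycle of `F^s` in degree `m` bounds in `F^s`. -/
theorem exists_mem_map_eq_of_subsingleton_homologyAt
    {X : ℤ → Type*} [∀ n, AddCommGroup (X n)] [∀ n, Module R (X n)]
    {d : ∀ i j : ℤ, X i →ₗ[R] X j} {F : ℤ → ∀ n : ℤ, Submodule R (X n)}
    (hsub : ∀ p i j : ℤ, ∀ x : X i, x ∈ F p i → d i j x ∈ F p j)
    {s m n : ℤ} (hmn : m + 1 = n)
    (hs : Subsingleton (homologyAt (fun k => ↥(F s k)) (subD X d F hsub s) m))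
    {z : X m} (hz : z ∈ F s m) (hdz : d m (m - 1) z = 0) :
    ∃ y ∈ F s n, d n m y = z := by
  subst hmn
  have hker : (⟨z, hz⟩ : F s m) ∈ LinearMap.ker (subD X d F hsub s m (m - 1)) :=
    Subtype.ext hdz
  obtain ⟨y, hy⟩ := (Submodule.Quotient.mk_eq_zero _ (x := ⟨_, hker⟩)).mp (hs.elim _ 0)
  exact ⟨y, y.2, congrArg Subtype.val hy⟩

/-- Let `R` be a ring and `X` a chain complex of left `R`-modules with a
filtration `(F p)ₚ` by subcomplexes.  Fix `p q : ℤ` and set `n = p + q`.  If there exists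
`r₀ ≥ 1` with `H_{n−1}(F^{p−r₀}) = 0`, then
`(⋂_{r≥0} I^r_{p,q}) + F^{p−1}_n = (Ker ∂_n ∩ F^p_n) + F^{p−1}_n` as submodules of `X_n`. -/
theorem iInf_filtI_sup_eq
    (X : ℤ → Type*) [∀ n, AddCommGroup (X n)] [∀ n, Module R (X n)]
    (d : ∀ i j : ℤ, X i →ₗ[R] X j)
    (hshape : ∀ i j : ℤ, j ≠ i - 1 → d i j = 0)
    (hdd : ∀ i j k : ℤ, ∀ x : X i, d j k (d i j x) = 0)
    (F : ℤ → ∀ n : ℤ, Submodule R (X n))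
    (hmono : ∀ p n : ℤ, F (p - 1) n ≤ F p n)
    (hsub : ∀ p i j : ℤ, ∀ x : X i, x ∈ F p i → d i j x ∈ F p j)
    (p q : ℤ)
    (hvanish : ∃ r₀ : ℤ, 1 ≤ r₀ ∧
      Subsingleton (homologyAt (fun m => ↥(F (p - r₀) m)) (subD X d F hsub (p - r₀))
        (p + q - 1))) :
    (⨅ r : ℕ, filtI X d F (r : ℤ) p (p + q)) ⊔ F (p - 1) (p + q)
      = (LinearMap.ker (d (p + q) (p + q - 1)) ⊓ F p (p + q)) ⊔ F (p - 1) (p + q) := by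
  obtain ⟨r₀, hr₀, hs⟩ := hvanish
  have hF : ∀ k, Monotone fun s => F s k := fun k =>
    monotone_int_of_le_succ fun s => by simpa using hmono (s + 1) k
  apply le_antisymm
  · refine sup_le (fun x hx => ?_) le_sup_right
    have hx₀ := (Submodule.mem_iInf _).mp hx r₀.toNat
    rw [Int.toNat_of_nonneg (by lia)] at hx₀
    obtain ⟨hdx, hxp⟩ := hx₀
    obtain ⟨y, hy, hyx⟩ := exists_mem_map_eq_of_subsingleton_homologyAt hsub
      (sub_add_cancel (p + q) 1) hs hdx (hdd _ _ _ x)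
    refine Submodule.mem_sup.mpr ⟨x - y, ⟨?_, ?_⟩, y, ?_, sub_add_cancel x y⟩
    · exact LinearMap.mem_ker.mpr (by rw [map_sub, hyx, sub_self])
    · exact sub_mem hxp (hF _ (by lia : p - r₀ ≤ p) hy)
    · exact hF _ (by lia : p - r₀ ≤ p - 1) hy
  · refine sup_le_sup_right (le_iInf fun r => inf_le_inf_right _ fun x hx => ?_) _
    rw [Submodule.mem_comap, LinearMap.mem_ker.mp hx]
    exact zero_mem _
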